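/- Let h ≥ 6 and let s be a finite-order linear automorphism of an h-dimensional complex vector space W with s ≠ id and s ≠ −id. Write the eigenvalues of s (with multiplicity) as α₁, …, α_h, and suppose they satisfy the integrality condition. Writing αᵢ = e^{2πi aᵢ} with aᵢ ∈ [0,1), the age of the induced automorphism Sym²s of Sym²W satisfies λ_{Sym²W}(s) = Σ_{1≤i≤j≤h} {aᵢ + aⱼ} > 1, where {x} denotes the fractional part of a real number x. -/

import Mathlib

open Polynomial

/-- The submodule of `W ⊗ W` generated by `x ⊗ y - y ⊗ x`. -/
noncomputable def SymKer (R M : Type*) [CommRing R] [AddCommGroup M] [Module R M] :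
    Submodule R (TensorProduct R M M) :=
  Submodule.span R {z | ∃ x y : M, z = x ⊗ₜ[R] y - y ⊗ₜ[R] x}

/-- The second symmetric power `Sym²M = (M ⊗ M)/⟨x⊗y - y⊗x⟩`. -/
abbrev SymSq (R M : Type*) [CommRing R] [AddCommGroup M] [Module R M] :=
  TensorProduct R M M ⧸ SymKer R M

/-- The automorphism `Sym²f` of `Sym²M` induced by `f : M → M`. -/
noncomputable def sym2Map {R M : Type*} [CommRing R] [AddCommGroup M] [Module R M]
    (f : M →ₗ[R] M) : SymSq R M →ₗ[R] SymSq R M :=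
  Submodule.mapQ (SymKer R M) (SymKer R M) (TensorProduct.map f f) (by
    rw [SymKer, Submodule.span_le]
    rintro z ⟨x, y, rfl⟩
    simp only [SetLike.mem_coe, Submodule.mem_comap, map_sub, TensorProduct.map_tmul]
    exact Submodule.subset_span ⟨f x, f y, rfl⟩)

/-- The age `λ(f)` of a finite-order endomorphism `f` of a finite-dimensional complex
vector space: writing the eigenvalues (roots of the characteristic polynomial, with
multiplicity) as `e^{2πi aⱼ}` with `aⱼ ∈ [0,1)`, the age is `Σⱼ aⱼ`. -/
noncomputable def age {T : Type*} [AddCommGroup T] [Module ℂ T] [Module.Finite ℂ T]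
    (f : Module.End ℂ T) : ℝ :=
  ((LinearMap.charpoly f).roots.map (fun z => Int.fract (Complex.arg z / (2 * Real.pi)))).sum

lemma charpoly_of_eigenbasis {V ι : Type*} [AddCommGroup V] [Module ℂ V] [Module.Finite ℂ V]
    [Fintype ι] [DecidableEq ι] (f : Module.End ℂ V) (b : Module.Basis ι ℂ V) (e : ι → ℂ)
    (hb : ∀ i, f (b i) = e i • b i) : LinearMap.charpoly f = ∏ i, (X - C (e i)) := by
  rw [← LinearMap.charpoly_toMatrix f b]
  have : LinearMap.toMatrix b b f = Matrix.diagonal e := by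
    ext i j
    rw [LinearMap.toMatrix_apply, hb]
    by_cases hij : i = j
    · subst hij; simp
    · simp [hij]
  rw [this, Matrix.charpoly_diagonal]

lemma exists_equiv_of_map_eq {ι κ γ : Type*} [Fintype ι] [Fintype κ] [DecidableEq γ]
    (f : ι → γ) (g : κ → γ)
    (hfg : Finset.univ.val.map f = Finset.univ.val.map g) : ∃ σ : ι ≃ κ, ∀ i, g (σ i) = f i := by
  have hc : ∀ c, Fintype.card {i // f i = c} = Fintype.card {i // g i = c} := by
    intro c
    have := congrArg (Multiset.count c) hfg
    rw [Multiset.count_map, Multiset.count_map] at this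
    rw [Fintype.card_subtype, Fintype.card_subtype, Finset.card_def, Finset.card_def,
      Finset.filter_val, Finset.filter_val]
    simpa only [eq_comm] using this
  exact ⟨Equiv.ofFiberEquiv fun c => Fintype.equivOfCardEq (hc c),
    fun i => Equiv.ofFiberEquiv_map _ i⟩

lemma roots_prod_lin {ι : Type*} [Fintype ι] (e : ι → ℂ) :
    (∏ i, (X - C (e i))).roots = Finset.univ.val.map e := by
  have := Polynomial.roots_multiset_prod_X_sub_C (Finset.univ.val.map e)
  rw [Multiset.map_map] at this
  exact this

lemma exists_eigenbasis {W : Type*} [AddCommGroup W] [Module ℂ W] [FiniteDimensional ℂ W]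
    {h : ℕ} 
    (s : Module.End ℂ W) (n : ℕ) (hn : 0 < n) (hord : s ^ n = 1)
    (e : Fin h → ℂ) (heig : LinearMap.charpoly s = ∏ i, (X - C (e i))) :
    ∃ b : Module.Basis (Fin h) ℂ W, ∀ i, s (b i) = e i • b i := by
  classical
  have hss : s.IsSemisimple := by
    refine Module.End.isSemisimple_of_squarefree_aeval_eq_zero (p := X ^ n - 1)
      (X_pow_sub_one_separable_iff.mpr (by exact_mod_cast hn.ne')).squarefree ?_
    simp [hord]
  have htop := hss.iSup_eigenspace_eq_top
  let S : Set W := ⋃ μ : ℂ, (s.eigenspace μ : Set W)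
  have hS : ⊤ ≤ Submodule.span ℂ S := by
    rw [← htop]
    exact iSup_le fun μ x hx => Submodule.subset_span (Set.mem_iUnion.2 ⟨μ, hx⟩)
  obtain ⟨ι, b0, hb0⟩ : ∃ (ι : Set W) (b : Module.Basis ι ℂ W), ∀ i, b i ∈ S :=
    ⟨_, Module.Basis.ofSpan hS, fun i => Module.Basis.ofSpan_subset hS ⟨i, rfl⟩⟩
  have := Module.Finite.finite_basis b0
  have := Fintype.ofFinite ι
  have hμ : ∀ i, ∃ μ : ℂ, s (b0 i) = μ • b0 i := fun i => by
    obtain ⟨μ, hμ⟩ := Set.mem_iUnion.1 (hb0 i)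
    exact ⟨μ, Module.End.mem_eigenspace_iff.1 hμ⟩
  choose μ hμ using hμ
  have h1 := charpoly_of_eigenbasis s b0 μ hμ
  have h2 := congrArg Polynomial.roots (h1.symm.trans heig)
  rw [roots_prod_lin, roots_prod_lin] at h2
  obtain ⟨σ, hσ⟩ := exists_equiv_of_map_eq _ _ h2
  refine ⟨b0.reindex σ, fun i => ?_⟩
  obtain ⟨i, rfl⟩ := σ.surjective i
  simp [hμ, hσ]

lemma age_of_eigenbasis {V ι : Type*} [AddCommGroup V] [Module ℂ V] [Module.Finite ℂ V]
    [Fintype ι] (f : Module.End ℂ V) (b : Module.Basis ι ℂ V) (e : ι → ℂ)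
    (hb : ∀ i, f (b i) = e i • b i) :
    age f = ∑ i, Int.fract (Complex.arg (e i) / (2 * Real.pi)) := by
  classical
  rw [age, charpoly_of_eigenbasis f b e hb, roots_prod_lin, Multiset.map_map]
  rfl

/-- The functional `x ⊗ y ↦ x_i y_j + x_j y_i` on `Sym²`. -/
noncomputable def symCoord {V ι : Type*} [AddCommGroup V] [Module ℂ V]
    (b : Module.Basis ι ℂ V) (i j : ι) : SymSq ℂ V →ₗ[ℂ] ℂ :=
  (SymKer ℂ V).liftQ
    (TensorProduct.lift ((LinearMap.mul ℂ ℂ).compl₁₂ (b.coord i) (b.coord j) +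
      (LinearMap.mul ℂ ℂ).compl₁₂ (b.coord j) (b.coord i))) (by
    rw [SymKer, Submodule.span_le]
    rintro z ⟨x, y, rfl⟩
    simp only [SetLike.mem_coe, LinearMap.mem_ker, map_sub, TensorProduct.lift.tmul,
      LinearMap.add_apply, LinearMap.compl₁₂_apply, LinearMap.mul_apply']
    ring)

lemma exists_symSq_basis {V : Type*} [AddCommGroup V] [Module ℂ V] {h : ℕ}
    (b : Module.Basis (Fin h) ℂ V) :
    ∃ B : Module.Basis {p : Fin h × Fin h // p.1 ≤ p.2} ℂ (SymSq ℂ V),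
      ∀ p, B p = (SymKer ℂ V).mkQ (b p.1.1 ⊗ₜ[ℂ] b p.1.2) := by
  let v : {p : Fin h × Fin h // p.1 ≤ p.2} → SymSq ℂ V :=
    fun p => (SymKer ℂ V).mkQ (b p.1.1 ⊗ₜ[ℂ] b p.1.2)
  have hli : LinearIndependent ℂ v := by
    rw [Fintype.linearIndependent_iff]
    rintro g hg ⟨⟨i, j⟩, hij⟩
    have h1 := congrArg (symCoord b i j) hg
    rw [map_sum, map_zero, Finset.sum_eq_single ⟨(i, j), hij⟩] at h1
    · simp only [v, symCoord, map_smul, Submodule.mkQ_apply, Submodule.liftQ_apply,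
        TensorProduct.lift.tmul, LinearMap.add_apply, LinearMap.compl₁₂_apply,
        LinearMap.mul_apply', Module.Basis.coord_apply, Module.Basis.repr_self, smul_eq_mul] at h1
      by_cases hij' : i = j
      · subst hij'; simpa using h1
      · simpa [hij', Finsupp.single_apply, Ne.symm hij'] using h1
    · rintro ⟨⟨k, l⟩, hkl⟩ - hne
      simp only [v, symCoord, map_smul, Submodule.mkQ_apply, Submodule.liftQ_apply,
        TensorProduct.lift.tmul, LinearMap.add_apply, LinearMap.compl₁₂_apply,
        LinearMap.mul_apply', Module.Basis.coord_apply, Module.Basis.repr_self, smul_eq_mul,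
        Finsupp.single_apply]
      simp only [ne_eq, Subtype.mk.injEq, Prod.mk.injEq] at hne hkl hij
      have h2 : ¬ (k = j ∧ l = i) := by
        rintro ⟨rfl, rfl⟩
        exact hne ⟨le_antisymm hkl hij, le_antisymm hij hkl⟩
      split_ifs <;> simp_all
    · simp
  have hsp : ⊤ ≤ Submodule.span ℂ (Set.range v) := by
    have hT : Submodule.span ℂ (Set.range (b.tensorProduct b)) = ⊤ := (b.tensorProduct b).span_eq
    rw [← Submodule.range_mkQ (SymKer ℂ V), LinearMap.range_eq_map, ← hT, Submodule.map_span,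
      Submodule.span_le]
    rintro _ ⟨_, ⟨⟨i, j⟩, rfl⟩, rfl⟩
    rw [Module.Basis.tensorProduct_apply]
    rcases le_total i j with hij | hij
    · exact Submodule.subset_span ⟨⟨(i, j), hij⟩, rfl⟩
    · refine Submodule.subset_span ⟨⟨(j, i), hij⟩, ?_⟩
      simp only [v, Submodule.mkQ_apply]
      rw [Submodule.Quotient.eq]
      exact Submodule.subset_span ⟨_, _, rfl⟩
  exact ⟨Module.Basis.mk hli hsp, fun p => by rw [Module.Basis.mk_apply]⟩

lemma fract_arg_exp (x : ℝ) :
    Int.fract (Complex.arg (Complex.exp (2 * Real.pi * Complex.I * x)) / (2 * Real.pi))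
      = Int.fract x := by
  have h1 : (2 * Real.pi * Complex.I * x : ℂ) = ((2 * Real.pi * x : ℝ) : ℂ) * Complex.I := by
    push_cast; ring
  rw [h1, Complex.arg_exp_mul_I]
  have hp := Real.pi_pos
  rw [Int.fract_eq_fract]
  have := self_sub_toIocMod Real.two_pi_pos (-Real.pi) (2 * Real.pi * x)
  refine ⟨-toIocDiv Real.two_pi_pos (-Real.pi) (2 * Real.pi * x), ?_⟩
  rw [zsmul_eq_mul] at this
  push_cast
  field_simp
  linarith

lemma age_sym2 {W : Type*} [AddCommGroup W] [Module ℂ W] [FiniteDimensional ℂ W] {h : ℕ}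
    (s : Module.End ℂ W) (a : Fin h → ℝ) (b : Module.Basis (Fin h) ℂ W)
    (hb : ∀ i, s (b i) = Complex.exp (2 * Real.pi * Complex.I * (a i)) • b i) :
    age (sym2Map s) = ∑ p ∈ Finset.univ.filter (fun p : Fin h × Fin h => p.1 ≤ p.2),
        Int.fract (a p.1 + a p.2) := by
  obtain ⟨B, hB⟩ := exists_symSq_basis b
  rw [age_of_eigenbasis (sym2Map s) B (fun p => Complex.exp
      (2 * Real.pi * Complex.I * ((a p.1.1 + a p.1.2 : ℝ) : ℂ)))]
  · simp_rw [fract_arg_exp]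
    rw [Finset.sum_subtype (p := fun p : Fin h × Fin h => p.1 ≤ p.2)]
    simp
  · intro p
    rw [hB]
    simp only [sym2Map, Submodule.mkQ_apply, Submodule.mapQ_apply, TensorProduct.map_tmul, hb]
    rw [TensorProduct.smul_tmul_smul, Submodule.Quotient.mk_smul, ← Complex.exp_add]
    congr 2
    push_cast; ring

lemma exp_eq_iff (x y : ℝ) (hxy : Complex.exp (2 * Real.pi * Complex.I * x) =
    Complex.exp (2 * Real.pi * Complex.I * y)) : ∃ n : ℤ, x = y + n := by
  obtain ⟨n, hn⟩ := Complex.exp_eq_exp_iff_exists_int.1 hxy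
  refine ⟨n, ?_⟩
  have h0 : (2 * Real.pi * Complex.I : ℂ) ≠ 0 := Complex.two_pi_I_ne_zero
  have : (x : ℂ) = y + n := mul_left_cancel₀ h0 (by rw [hn]; ring)
  exact_mod_cast this

/-- A numerator `k` coprime to `m` with `m/6 ≤ k < m/2`. -/
lemma exists_good_num (m : ℕ) (hm : 3 ≤ m) : ∃ k : ℕ, k.Coprime m ∧ m ≤ 6 * k ∧ 2 * k < m := by
  obtain ⟨t, r, hr, rfl⟩ : ∃ t r, r < 4 ∧ m = 4 * t + r := ⟨m / 4, m % 4, by omega, by omega⟩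
  have key : ∀ k M : ℕ, ∀ x y : ℤ, x * k + y * M = 1 → k.Coprime M :=
    fun k M x y hxy => Nat.isCoprime_iff_coprime.1 ⟨x, y, hxy⟩
  interval_cases r
  · obtain ⟨t, rfl⟩ : ∃ u, t = u + 1 := ⟨t - 1, by omega⟩
    refine ⟨2 * t + 1, key _ _ (1 + 2 * t) (-t) ?_, by omega, by omega⟩
    push_cast; ring
  · refine ⟨2 * t, key _ _ (-2) 1 ?_, by omega, by omega⟩
    push_cast; ring
  · obtain ⟨t, rfl⟩ : ∃ u, t = u + 1 := ⟨t - 1, by omega⟩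
    refine ⟨2 * t + 1, key _ _ (2 * t + 1 + 2 * t * (t + 1)) (-(t * (t + 1))) ?_,
      by omega, by omega⟩
    push_cast; ring
  · refine ⟨2 * t + 1, key _ _ (-2) 1 ?_, by omega, by omega⟩
    push_cast; ring

lemma exists_ge_sixth {h : ℕ} (c : Fin h → ℝ) (hc : ∀ i, 0 ≤ c i ∧ c i < 1 / 2)
    (q : ℤ[X])
    (hq1 : ∀ i, aeval (Complex.exp (2 * Real.pi * Complex.I * (c i))) q = 0)
    (hq2 : ∀ z : ℂ, aeval z q = 0 → ∃ i, z = Complex.exp (2 * Real.pi * Complex.I * (c i)) ∨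
      z = starRingEnd ℂ (Complex.exp (2 * Real.pi * Complex.I * (c i))))
    (N : ℕ) (hN : 0 < N) (hpow : ∀ i, Complex.exp (2 * Real.pi * Complex.I * (c i)) ^ N = 1)
    (hne : ∃ i, c i ≠ 0) : ∃ j, 1 / 6 ≤ c j := by
  obtain ⟨i, hi⟩ := hne
  set α := Complex.exp (2 * Real.pi * Complex.I * (c i)) with hα
  have hprim := IsPrimitiveRoot.orderOf α
  have hm0 : 0 < orderOf α := orderOf_pos_iff.2 (isOfFinOrder_iff_pow_eq_one.2 ⟨N, hN, hpow i⟩)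
  set m := orderOf α with hm
  have hci := hc i
  have hm3 : 3 ≤ m := by
    by_contra hlt
    have h2 : α ^ 2 = 1 := by
      have : m = 1 ∨ m = 2 := by omega
      rcases this with h1 | h1
      · have := hprim.pow_eq_one
        rw [h1, pow_one] at this
        simp [this]
      · have := hprim.pow_eq_one
        rwa [h1] at this
    have h3 : Complex.exp (2 * Real.pi * Complex.I * ((2 * c i : ℝ) : ℂ)) =
        Complex.exp (2 * Real.pi * Complex.I * ((0 : ℝ) : ℂ)) := by
      rw [Complex.ofReal_zero, mul_zero, Complex.exp_zero, ← h2, hα, ← Complex.exp_nat_mul]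
      congr 1; push_cast; ring
    obtain ⟨k, hk⟩ := exp_eq_iff _ _ h3
    have hk0 : 0 ≤ (k : ℝ) := by linarith
    have hk1 : (k : ℝ) < 1 := by linarith
    have : k = 0 := by
      have : (0 : ℤ) ≤ k := by exact_mod_cast hk0
      have : k < 1 := by exact_mod_cast hk1
      omega
    rw [this] at hk
    apply hi
    push_cast at hk
    linarith
  obtain ⟨k, hk1, hk2, hk3⟩ := exists_good_num m hm3
  have hβ : IsPrimitiveRoot (Complex.exp (2 * Real.pi * Complex.I * (k / m))) m :=
    Complex.isPrimitiveRoot_exp_of_coprime k m hm0.ne' hk1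
  have hdvd : cyclotomic m ℤ ∣ q := by
    rw [cyclotomic_eq_minpoly hprim hm0]
    exact minpoly.isIntegrallyClosed_dvd (hprim.isIntegral hm0) (hq1 i)
  have hβq : aeval (Complex.exp (2 * Real.pi * Complex.I * (k / m))) q = 0 := by
    rw [cyclotomic_eq_minpoly hβ hm0] at hdvd
    exact aeval_eq_zero_of_dvd_aeval_eq_zero hdvd (minpoly.aeval _ _)
  have hmR : (0 : ℝ) < m := by exact_mod_cast hm0
  have hx0 : (1 : ℝ) / 6 ≤ (k : ℝ) / m := by
    rw [div_le_div_iff₀ (by norm_num) hmR]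
    have : (m : ℝ) ≤ 6 * k := by exact_mod_cast hk2
    linarith
  have hx1 : (k : ℝ) / m < 1 / 2 := by
    rw [div_lt_div_iff₀ hmR (by norm_num)]
    have : 2 * (k : ℝ) < m := by exact_mod_cast hk3
    linarith
  have hcast : ((k : ℂ) / m) = (((k : ℝ) / m : ℝ) : ℂ) := by push_cast; rfl
  obtain ⟨j, hj⟩ := hq2 _ hβq
  have hcj := hc j
  refine ⟨j, ?_⟩
  rw [hcast] at hj
  rcases hj with hj | hj
  · obtain ⟨t, ht⟩ := exp_eq_iff _ _ hj
    have h1 : (t : ℝ) < 1 := by linarith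
    have h2 : -1 < (t : ℝ) := by linarith
    have h1' : t < 1 := by exact_mod_cast h1
    have h2' : -1 < t := by exact_mod_cast h2
    have : t = 0 := by omega
    rw [this] at ht
    push_cast at ht
    linarith
  · have : starRingEnd ℂ (Complex.exp (2 * Real.pi * Complex.I * (c j))) =
        Complex.exp (2 * Real.pi * Complex.I * ((- c j : ℝ) : ℂ)) := by
      rw [← Complex.exp_conj]
      congr 1
      simp [Complex.conj_ofNat]
    rw [this] at hj
    obtain ⟨t, ht⟩ := exp_eq_iff _ _ hj
    have h1 : (t : ℝ) < 1 := by linarith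
    have h2 : 0 < (t : ℝ) := by linarith
    have h1' : t < 1 := by exact_mod_cast h1
    have h2' : 0 < t := by exact_mod_cast h2
    omega

lemma two_mul_sum_le {h : ℕ} (f : Fin h → Fin h → ℝ) (hf : ∀ i j, f i j = f j i) :
    2 * ∑ p ∈ Finset.univ.filter (fun p : Fin h × Fin h => p.1 ≤ p.2), f p.1 p.2 =
      ∑ i, ∑ j, f i j + ∑ i, f i i := by
  have h1 : ∑ p ∈ Finset.univ.filter (fun p : Fin h × Fin h => p.1 ≤ p.2), f p.1 p.2 =
      ∑ i, ∑ j, if i ≤ j then f i j else 0 := by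
    rw [Finset.sum_filter, Fintype.sum_prod_type]
  have h2 : ∑ i, ∑ j, (if i ≤ j then f i j else 0) = ∑ i, ∑ j, if j ≤ i then f i j else 0 := by
    rw [Finset.sum_comm]
    refine Finset.sum_congr rfl fun i _ => Finset.sum_congr rfl fun j _ => ?_
    rw [hf]
  have h3 : ∑ i, f i i = ∑ i, ∑ j, if i = j then f i j else 0 := by simp
  rw [two_mul, h1]
  nth_rewrite 2 [h2]
  rw [h3, ← Finset.sum_add_distrib, ← Finset.sum_add_distrib]
  refine Finset.sum_congr rfl fun i _ => ?_
  rw [← Finset.sum_add_distrib, ← Finset.sum_add_distrib]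
  refine Finset.sum_congr rfl fun j _ => ?_
  rcases lt_trichotomy i j with hij | hij | hij
  · simp [hij.le, hij.not_ge, hij.ne]
  · simp [hij]
  · simp [hij.le, hij.not_ge, hij.ne']

lemma sum_ge_two {h : ℕ} (g : Fin h → ℝ) (hg : ∀ i, 0 ≤ g i) (i j : Fin h) (hij : i ≠ j) :
    g i + g j ≤ ∑ k, g k := by
  rw [← Finset.sum_pair hij]
  exact Finset.sum_le_sum_of_subset_of_nonneg (Finset.subset_univ _) fun k _ _ => hg k

lemma mixed_case {h : ℕ} (hh : 6 ≤ h) (a : Fin h → ℝ) (ha : ∀ i, a i ∈ Set.Ico (0 : ℝ) 1)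
    (x y : Fin h) (hx : a x < 1 / 2) (hy : 1 / 2 ≤ a y) :
    1 < ∑ p ∈ Finset.univ.filter (fun p : Fin h × Fin h => p.1 ≤ p.2),
        Int.fract (a p.1 + a p.2) := by
  have hS := two_mul_sum_le (fun i j => Int.fract (a i + a j)) (fun i j => by rw [add_comm])
  have hnn : ∀ i j, 0 ≤ Int.fract (a i + a j) := fun i j => Int.fract_nonneg _
  have hD0 : 0 ≤ ∑ i, Int.fract (a i + a i) := Finset.sum_nonneg fun i _ => hnn i i
  have hne : ∀ u v, a u < 1 / 2 → 1 / 2 ≤ a v → u ≠ v := by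
    rintro u v h1 h2 rfl; linarith
  by_cases hbad : ∃ u v, a u < 1 / 2 ∧ 1 / 2 ≤ a v ∧ 1 ≤ a u + a v
  · obtain ⟨u, v, hu, hv, huv⟩ := hbad
    have hu0 := ha u
    have hv0 := ha v
    simp only [Set.mem_Ico] at hu0 hv0
    have huv' := hne u v hu hv
    obtain ⟨k, hk⟩ : ∃ k, k ∉ ({u, v} : Finset (Fin h)) := by
      by_contra! hcon
      have h1 : (Finset.univ : Finset (Fin h)) ⊆ {u, v} := fun k _ => hcon k
      have h2 := Finset.card_le_card h1
      have h3 := Finset.card_le_two (a := u) (b := v)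
      rw [Finset.card_univ, Fintype.card_fin] at h2
      omega
    simp only [Finset.mem_insert, Finset.mem_singleton, not_or] at hk
    have hfu : Int.fract (a u + a u) = 2 * a u := by
      rw [Int.fract_eq_iff]; exact ⟨by linarith, by linarith, 0, by push_cast; ring⟩
    have hfv : Int.fract (a v + a v) = 2 * a v - 1 := by
      rw [Int.fract_eq_iff]; exact ⟨by linarith, by linarith, 1, by push_cast; ring⟩
    have hD := sum_ge_two (fun i => Int.fract (a i + a i)) (fun i => hnn i i) u v huv'
    have hrow : ∀ i, i ≠ k → Int.fract (a i + a i) + Int.fract (a i + a k) ≤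
        ∑ j, Int.fract (a i + a j) := fun i hi =>
      sum_ge_two (fun j => Int.fract (a i + a j)) (fun j => hnn i j) i k hi
    have hG := sum_ge_two (fun i => ∑ j, Int.fract (a i + a j) - Int.fract (a i + a i))
      (fun i => sub_nonneg.2 (Finset.single_le_sum (f := fun j => Int.fract (a i + a j))
        (fun j _ => hnn i j) (Finset.mem_univ i))) u v huv'
    rw [Finset.sum_sub_distrib] at hG
    have h1 := hrow u (Ne.symm hk.1)
    have h2 := hrow v (Ne.symm hk.2)
    have hpos : 0 < Int.fract (a u + a k) + Int.fract (a v + a k) := by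
      by_contra hcon
      have e1 : Int.fract (a u + a k) = 0 := by linarith [hnn u k, hnn v k]
      have e2 : Int.fract (a v + a k) = 0 := by linarith [hnn u k, hnn v k]
      obtain ⟨t, ht⟩ := Int.fract_eq_fract.1 (e1.trans e2.symm)
      have g1 : (t : ℝ) < 0 := by linarith
      have g2 : (-1 : ℝ) < t := by linarith
      have g1' : t < 0 := by exact_mod_cast g1
      have g2' : -1 < t := by exact_mod_cast g2
      omega
    linarith
  · push Not at hbad
    have hcross : ∀ u v, a u < 1 / 2 → 1 / 2 ≤ a v → 1 / 2 ≤ Int.fract (a u + a v) := by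
      intro u v hu hv
      have h1 := hbad u v hu hv
      have h2 := (ha u).1
      rw [Int.fract_eq_self.2 ⟨by linarith, h1⟩]
      linarith
    have hT := sum_ge_two (fun i => ∑ j, Int.fract (a i + a j))
      (fun i => Finset.sum_nonneg fun j _ => hnn i j) x y (hne x y hx hy)
    rw [← Finset.sum_add_distrib] at hT
    have hlow : ∑ _j : Fin h, (1 / 2 : ℝ) ≤
        ∑ j, (Int.fract (a x + a j) + Int.fract (a y + a j)) := by
      refine Finset.sum_le_sum fun j _ => ?_
      rcases lt_or_ge (a j) (1 / 2) with hj | hj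
      · have := hcross j y hj hy
        rw [add_comm] at this
        linarith [hnn x j]
      · linarith [hcross x j hx hj, hnn y j]
    rw [Finset.sum_const, Finset.card_univ, Fintype.card_fin, nsmul_eq_mul] at hlow
    have : (6 : ℝ) ≤ h := by exact_mod_cast hh
    linarith

lemma pure_case {h : ℕ} (hh : 6 ≤ h) (a c : Fin h → ℝ)
    (hc : ∀ i, 0 ≤ c i ∧ c i < 1 / 2) (hac : ∀ i j, ∃ t : ℤ, a i + a j = c i + c j + t)
    (hex : ∃ j, 1 / 6 ≤ c j) :
    1 < ∑ p ∈ Finset.univ.filter (fun p : Fin h × Fin h => p.1 ≤ p.2),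
        Int.fract (a p.1 + a p.2) := by
  have hf : ∀ i j, Int.fract (a i + a j) = c i + c j := by
    intro i j
    obtain ⟨t, ht⟩ := hac i j
    rw [ht, Int.fract_add_intCast, Int.fract_eq_self]
    exact ⟨by linarith [(hc i).1, (hc j).1], by linarith [(hc i).2, (hc j).2]⟩
  simp_rw [hf]
  have hS := two_mul_sum_le (fun i j => c i + c j) (fun i j => by rw [add_comm])
  simp only [Finset.sum_add_distrib, Finset.sum_const, Finset.card_univ, Fintype.card_fin,
    nsmul_eq_mul, ← Finset.mul_sum] at hS
  obtain ⟨j, hj⟩ := hex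
  have h1 := Finset.single_le_sum (f := c) (fun i _ => (hc i).1) (Finset.mem_univ j)
  have : (6 : ℝ) ≤ h := by exact_mod_cast hh
  rw [Finset.sum_add_distrib]
  nlinarith

/-- Let `s` be a finite-order automorphism of a `h`-dimensional (`h ≥ 6`) complex vector space `W`,
with `s ≠ ±1`, whose eigenvalues `αᵢ = e^{2πi aᵢ}` (with `aᵢ ∈ [0,1)`) satisfy the
integrality condition that `∏ᵢ (X - αᵢ)(X - α̅ᵢ)` has integer coefficients.  Then the age
of the induced automorphism `Sym²s` of `Sym²W` satisfies
`λ_{Sym²W}(s) = Σ_{i ≤ j} {aᵢ + aⱼ} > 1`. -/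
theorem age_sym2_gt_one_of_dim_ge_six
    (W : Type*) [AddCommGroup W] [Module ℂ W] [FiniteDimensional ℂ W]
    (h : ℕ) (hh : 6 ≤ h) (hW : Module.finrank ℂ W = h)
    (s : Module.End ℂ W) (n : ℕ) (hn : 0 < n) (hord : s ^ n = 1)
    (hs1 : s ≠ 1) (hs2 : s ≠ -1)
    (a : Fin h → ℝ) (ha : ∀ i, a i ∈ Set.Ico (0 : ℝ) 1)
    (heig : LinearMap.charpoly s =
      ∏ i, (X - C (Complex.exp (2 * Real.pi * Complex.I * (a i)))))
    (hint : ∃ q : Polynomial ℤ, q.map (Int.castRingHom ℂ) =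
      ∏ i, (X - C (Complex.exp (2 * Real.pi * Complex.I * (a i)))) *
        (X - C (starRingEnd ℂ (Complex.exp (2 * Real.pi * Complex.I * (a i)))))) :
    age (sym2Map s) =
      ∑ p ∈ Finset.univ.filter (fun p : Fin h × Fin h => p.1 ≤ p.2),
        Int.fract (a p.1 + a p.2) ∧
    1 < ∑ p ∈ Finset.univ.filter (fun p : Fin h × Fin h => p.1 ≤ p.2),
        Int.fract (a p.1 + a p.2) := by
  obtain ⟨b, hb⟩ := exists_eigenbasis s n hn hord _ heig
  refine ⟨age_sym2 s a b hb, ?_⟩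
  obtain ⟨q, hq⟩ := hint
  have hroot : ∀ z : ℂ, aeval z q = 0 ↔
      ∃ i, z = Complex.exp (2 * Real.pi * Complex.I * (a i)) ∨
      z = starRingEnd ℂ (Complex.exp (2 * Real.pi * Complex.I * (a i))) := by
    intro z
    have : aeval z q = (q.map (Int.castRingHom ℂ)).eval z := by
      rw [eval_map, aeval_def]; rfl
    rw [this, hq, eval_prod, Finset.prod_eq_zero_iff]
    simp [sub_eq_zero]
  have hpow : ∀ i, Complex.exp (2 * Real.pi * Complex.I * (a i)) ^ n = 1 := by
    intro i
    have h1 : ∀ k : ℕ, (s ^ k) (b i) =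
        Complex.exp (2 * Real.pi * Complex.I * (a i)) ^ k • b i := by
      intro k
      induction k with
      | zero => simp
      | succ k ih => rw [pow_succ', Module.End.mul_apply, ih, map_smul, hb, smul_smul, pow_succ]
    have h2 := h1 n
    rw [hord, Module.End.one_apply] at h2
    have h3 : (Complex.exp (2 * Real.pi * Complex.I * (a i)) ^ n - 1) • b i = 0 := by
      rw [sub_smul, ← h2, one_smul, sub_self]
    exact sub_eq_zero.1 ((smul_eq_zero.1 h3).resolve_right (b.ne_zero i))
  by_cases hP : ∃ x, a x < 1 / 2
  · by_cases hQ : ∃ y, 1 / 2 ≤ a y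
    · obtain ⟨x, hx⟩ := hP
      obtain ⟨y, hy⟩ := hQ
      exact mixed_case hh a ha x y hx hy
    · push Not at hQ
      have hc : ∀ i, 0 ≤ a i ∧ a i < 1 / 2 := fun i => ⟨(ha i).1, hQ i⟩
      refine pure_case hh a a hc (fun i j => ⟨0, by simp⟩) ?_
      refine exists_ge_sixth a hc q (fun i => (hroot _).2 ⟨i, Or.inl rfl⟩)
        (fun z hz => (hroot z).1 hz) n hn hpow ?_
      by_contra! h0
      apply hs1
      refine b.ext fun i => ?_
      rw [hb, h0]
      simp
  · push Not at hP
    have hc : ∀ i, 0 ≤ a i - 1 / 2 ∧ a i - 1 / 2 < 1 / 2 := fun i =>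
      ⟨by linarith [hP i], by linarith [(ha i).2]⟩
    have hexp : ∀ i, Complex.exp (2 * Real.pi * Complex.I * ((a i - 1 / 2 : ℝ) : ℂ)) =
        - Complex.exp (2 * Real.pi * Complex.I * (a i)) := by
      intro i
      rw [show (2 * Real.pi * Complex.I * ((a i - 1 / 2 : ℝ) : ℂ)) =
        2 * Real.pi * Complex.I * (a i) - Real.pi * Complex.I by push_cast; ring,
        Complex.exp_sub, Complex.exp_pi_mul_I]
      ring
    refine pure_case hh a (fun i => a i - 1 / 2) hc (fun i j => ⟨1, by push_cast; ring⟩) ?_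
    have haev : ∀ z : ℂ, aeval z (q.comp (-X)) = aeval (-z) q := by
      intro z
      rw [aeval_comp]; simp
    refine exists_ge_sixth (fun i => a i - 1 / 2) hc (q.comp (-X)) ?_ ?_ (2 * n) (by omega) ?_ ?_
    · intro i
      rw [haev, hexp, neg_neg]
      exact (hroot _).2 ⟨i, Or.inl rfl⟩
    · intro z hz
      rw [haev] at hz
      obtain ⟨i, hi⟩ := (hroot _).1 hz
      refine ⟨i, ?_⟩
      rw [hexp, map_neg]
      rcases hi with hi | hi
      · left; rw [← hi, neg_neg]
      · right; rw [← hi, neg_neg]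
    · intro i
      rw [hexp, pow_mul, neg_sq, ← pow_mul, mul_comm 2 n, pow_mul, hpow, one_pow]
    · by_contra! h0
      apply hs2
      refine b.ext fun i => ?_
      have h1 := hexp i
      have h2 := h0 i
      rw [h2] at h1
      simp only [Complex.ofReal_zero, mul_zero, Complex.exp_zero] at h1
      rw [hb, ← neg_neg (Complex.exp _), ← h1]
      simp
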